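/- If for every agent, as one goes through a sequence of cost share vectors, the unit price Bᵢ/(1-Tᵢ) that agent i faces is nondecreasing and her release time Tᵢ is nondecreasing, then the sequential unanimous mechanism defined by that sequence is strategy-proof. -/

import Mathlib

open scoped Classical

/-- Utility of agent `i` (with true valuation `trueVal`) under the sequential
unanimous mechanism given by the sequence of cost share vectors `(T j, B j)`,
when the agents report `report`: the mechanism implements the first cost share
vector accepted by all agents (agent `i'` accepts vector `j` iff
`report i' * (1 - T j i') - B j i' ≥ 0`), giving agent `i` release time `T j i`
and payment `B j i`; if no vector is unanimously accepted the project is not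
built and everyone's utility is `0`. -/
noncomputable def seqUtil {n m : ℕ} (T B : Fin m → Fin n → ℝ)
    (report : Fin n → ℝ) (trueVal : ℝ) (i : Fin n) : ℝ :=
  let S := Finset.univ.filter fun j : Fin m =>
    ∀ i' : Fin n, 0 ≤ report i' * (1 - T j i') - B j i'
  if h : S.Nonempty then trueVal * (1 - T (S.min' h) i) - B (S.min' h) i else 0

/-- If for every agent the unit price `Bᵢ/(1-Tᵢ)` and the release
time `Tᵢ` are nondecreasing along the sequence of cost share vectors, then the
sequential unanimous mechanism is strategy-proof. -/
theorem stmt11 {n m : ℕ} (T B : Fin m → Fin n → ℝ)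
    (hT : ∀ j i, T j i ∈ Set.Icc (0:ℝ) 1)
    (hB : ∀ j i, 0 ≤ B j i)
    (hBsum : ∀ j, ∑ i, B j i = 1)
    (hprice : ∀ i : Fin n, Monotone fun j => B j i / (1 - T j i))
    (htime : ∀ i : Fin n, Monotone fun j => T j i) :
    ∀ (i : Fin n) (v : Fin n → ℝ) (v' : ℝ),
      seqUtil T B (Function.update v i v') (v i) i ≤ seqUtil T B v (v i) i := by
  intro i v v'
  have key : ∀ k k' : Fin m, k ≤ k' → 0 ≤ v i * (1 - T k i) - B k i →
      v i * (1 - T k' i) - B k' i ≤ v i * (1 - T k i) - B k i := by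
    intro k k' hk h0
    have ht : T k i ≤ T k' i := htime i hk
    have hp : B k i / (1 - T k i) ≤ B k' i / (1 - T k' i) := hprice i hk
    rcases (hT k' i).2.eq_or_lt with h1 | h1
    · have := hB k' i
      rw [h1]
      linarith
    · have a' : 0 < 1 - T k' i := by linarith
      have a : 0 < 1 - T k i := by linarith
      have e : B k i = B k i / (1 - T k i) * (1 - T k i) := by field_simp
      have e' : B k' i = B k' i / (1 - T k' i) * (1 - T k' i) := by field_simp
      generalize B k i / (1 - T k i) = p at *
      generalize B k' i / (1 - T k' i) = p' at *
      have hv : 0 ≤ v i - p := by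
        by_contra hc
        push Not at hc
        nlinarith [mul_pos_of_neg_of_neg hc (neg_lt_zero.mpr a)]
      have h2 := mul_nonneg hv (sub_nonneg.mpr ht)
      have h3 := mul_nonneg (sub_nonneg.mpr hp) a'.le
      rw [e, e']
      nlinarith
  have nonneg : 0 ≤ seqUtil T B v (v i) i := by
    unfold seqUtil
    extract_lets S
    split_ifs with h
    · exact (Finset.mem_filter.mp (S.min'_mem h)).2 i
    · exact le_rfl
  by_cases hneg : seqUtil T B (Function.update v i v') (v i) i ≤ 0
  · exact hneg.trans nonneg
  push Not at hneg
  unfold seqUtil at hneg ⊢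
  extract_lets S' at hneg
  extract_lets S
  by_cases h' : S'.Nonempty
  · rw [dif_pos h'] at hneg ⊢
    have hm : S'.min' h' ∈ S := by
      refine Finset.mem_filter.mpr ⟨Finset.mem_univ _, fun i' => ?_⟩
      by_cases hi : i' = i
      · subst hi
        exact hneg.le
      · have := (Finset.mem_filter.mp (S'.min'_mem h')).2 i'
        rwa [Function.update_of_ne hi] at this
    have h : S.Nonempty := ⟨_, hm⟩
    rw [dif_pos h]
    exact key _ _ (S.min'_le _ hm) ((Finset.mem_filter.mp (S.min'_mem h)).2 i)
  · rw [dif_neg h'] at hneg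
    exact absurd hneg (lt_irrefl _)
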